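/- I_b^{(∞)} is monotone under local operations: for completely positive trace-preserving maps Λ_A, Λ_B acting on A and B respectively, I_b^{(∞)}((Λ_A ⊗ Λ_B)[ρ_{AB}]) ≤ I_b^{(∞)}(ρ_{AB}). -/

import Mathlib

open scoped BigOperators Kronecker ComplexOrder
open Matrix Filter Topology

noncomputable section

/-- Shannon entropy (log base 2) of a finitely supported distribution. -/
def shannon {I : Type} [Fintype I] (p : I → ℝ) : ℝ := -∑ i, p i * Real.logb 2 (p i)

/-- `p` is a probability distribution. -/
def IsProbDist {I : Type} [Fintype I] (p : I → ℝ) : Prop :=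
  (∀ i, 0 ≤ p i) ∧ ∑ i, p i = 1

/-- First marginal of a joint distribution. -/
def margA {I J : Type} [Fintype J] (p : I × J → ℝ) : I → ℝ := fun i => ∑ j, p (i, j)

/-- Second marginal of a joint distribution. -/
def margB {I J : Type} [Fintype I] (p : I × J → ℝ) : J → ℝ := fun j => ∑ i, p (i, j)

/-- Classical mutual information of a joint distribution. -/
def classMI {I J : Type} [Fintype I] [Fintype J] (p : I × J → ℝ) : ℝ :=
  shannon (margA p) + shannon (margB p) - shannon p

/-- Kullback-Leibler divergence (log base 2). -/
def klDiv {I : Type} [Fintype I] (p q : I → ℝ) : ℝ := ∑ i, p i * Real.logb 2 (p i / q i)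

/-- A density operator: positive semidefinite with unit trace. -/
def IsDensity {n : Type} [Fintype n] (ρ : Matrix n n ℂ) : Prop :=
  ρ.PosSemidef ∧ ρ.trace = 1

/-- Von Neumann entropy (log base 2) via the eigenvalues of a Hermitian matrix. -/
def vnEntropy {n : Type} [Fintype n] [DecidableEq n] (ρ : Matrix n n ℂ) : ℝ :=
  if h : ρ.IsHermitian then -∑ i, h.eigenvalues i * Real.logb 2 (h.eigenvalues i) else 0

/-- Partial trace over the second tensor factor. -/
def ptraceB {A B : Type} [Fintype B] (ρ : Matrix (A × B) (A × B) ℂ) : Matrix A A ℂ :=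
  Matrix.of fun a a' => ∑ b, ρ (a, b) (a', b)

/-- Partial trace over the first tensor factor. -/
def ptraceA {A B : Type} [Fintype A] (ρ : Matrix (A × B) (A × B) ℂ) : Matrix B B ℂ :=
  Matrix.of fun b b' => ∑ a, ρ (a, b) (a, b')

/-- Quantum mutual information I(A:B) = S(ρ_A) + S(ρ_B) - S(ρ_{AB}). -/
def mutInfo {A B : Type} [Fintype A] [Fintype B] [DecidableEq A] [DecidableEq B]
    (ρ : Matrix (A × B) (A × B) ℂ) : ℝ :=
  vnEntropy (ptraceB ρ) + vnEntropy (ptraceA ρ) - vnEntropy ρ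

/-- Tensor product of two bipartite states, with the cut (A₁A₂ : B₁B₂). -/
def tens2 {A₁ B₁ A₂ B₂ : Type}
    (ρ : Matrix (A₁ × B₁) (A₁ × B₁) ℂ) (σ : Matrix (A₂ × B₂) (A₂ × B₂) ℂ) :
    Matrix ((A₁ × A₂) × (B₁ × B₂)) ((A₁ × A₂) × (B₁ × B₂)) ℂ :=
  Matrix.of fun x y => ρ (x.1.1, x.2.1) (y.1.1, y.2.1) * σ (x.1.2, x.2.2) (y.1.2, y.2.2)

/-- n-fold tensor power of a bipartite state, with the A^n : B^n cut. -/
def tpow {A B : Type} (σ : Matrix (A × B) (A × B) ℂ) (n : ℕ) :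
    Matrix ((Fin n → A) × (Fin n → B)) ((Fin n → A) × (Fin n → B)) ℂ :=
  Matrix.of fun x y => ∏ i, σ (x.1 i, x.2 i) (y.1 i, y.2 i)

/-- Reduced state of the k-th copy (partial trace over all other copies). -/
def copyMarginal {A B : Type} [Fintype A] [Fintype B] [DecidableEq A] [DecidableEq B] {n : ℕ}
    (ρ : Matrix ((Fin n → A) × (Fin n → B)) ((Fin n → A) × (Fin n → B)) ℂ) (k : Fin n) :
    Matrix (A × B) (A × B) ℂ :=
  Matrix.of fun x y => ∑ f : Fin n → A, ∑ g : Fin n → B,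
    if f k = x.1 ∧ g k = x.2 then
      ρ (f, g) (Function.update f k y.1, Function.update g k y.2) else 0

/-- `τ` is an n-copy broadcast state of `ρ`. -/
def IsBroadcast {A B : Type} [Fintype A] [Fintype B] [DecidableEq A] [DecidableEq B] (n : ℕ)
    (τ : Matrix ((Fin n → A) × (Fin n → B)) ((Fin n → A) × (Fin n → B)) ℂ)
    (ρ : Matrix (A × B) (A × B) ℂ) : Prop :=
  IsDensity τ ∧ ∀ k : Fin n, copyMarginal τ k = ρ

/-- n-copy broadcast mutual information (I_b)_n. -/
def Ib {A B : Type} [Fintype A] [Fintype B] [DecidableEq A] [DecidableEq B] (n : ℕ)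
    (ρ : Matrix (A × B) (A × B) ℂ) : ℝ :=
  sInf {x | ∃ τ, IsBroadcast n τ ρ ∧ x = mutInfo τ}

/-- Partial trace of a state on (A A' : B B') over the primed (ancilla) systems. -/
def ptracePrime {A B A' B' : Type} [Fintype A'] [Fintype B']
    (τ : Matrix ((A × A') × (B × B')) ((A × A') × (B × B')) ℂ) :
    Matrix (A × B) (A × B) ℂ :=
  Matrix.of fun x y => ∑ a', ∑ b', τ ((x.1, a'), (x.2, b')) ((y.1, a'), (y.2, b'))

/-- Partial trace of a state on (A A' : B B') over the unprimed systems. -/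
def ptraceMain {A B A' B' : Type} [Fintype A] [Fintype B]
    (τ : Matrix ((A × A') × (B × B')) ((A × A') × (B × B')) ℂ) :
    Matrix (A' × B') (A' × B') ℂ :=
  Matrix.of fun x y => ∑ a, ∑ b, τ ((a, x.1), (b, x.2)) ((a, y.1), (b, y.2))

/-- Conditional entanglement of mutual information (CEMI). -/
def EI {A B : Type} [Fintype A] [Fintype B] [DecidableEq A] [DecidableEq B]
    (ρ : Matrix (A × B) (A × B) ℂ) : ℝ :=
  (1 / 2) * sInf {x | ∃ (dA dB : ℕ)
    (τ : Matrix ((A × Fin dA) × (B × Fin dB)) ((A × Fin dA) × (B × Fin dB)) ℂ),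
    IsDensity τ ∧ ptracePrime τ = ρ ∧ x = mutInfo τ - mutInfo (ptraceMain τ)}

/-- Classical squashed entanglement, via the ensemble formula. -/
def EsqC {A B : Type} [Fintype A] [Fintype B] [DecidableEq A] [DecidableEq B]
    (ρ : Matrix (A × B) (A × B) ℂ) : ℝ :=
  (1 / 2) * sInf {x | ∃ (m : ℕ) (p : Fin m → ℝ) (σ : Fin m → Matrix (A × B) (A × B) ℂ),
    (∀ k, 0 ≤ p k) ∧ (∑ k, p k = 1) ∧ (∀ k, IsDensity (σ k)) ∧
    (∑ k, (p k : ℂ) • σ k = ρ) ∧ x = ∑ k, p k * mutInfo (σ k)}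

/-- Separability of a bipartite state. -/
def Separable {A B : Type} [Fintype A] [Fintype B]
    (ρ : Matrix (A × B) (A × B) ℂ) : Prop :=
  ∃ (m : ℕ) (p : Fin m → ℝ) (σA : Fin m → Matrix A A ℂ) (σB : Fin m → Matrix B B ℂ),
    (∀ k, 0 ≤ p k) ∧ (∑ k, p k = 1) ∧ (∀ k, IsDensity (σA k) ∧ IsDensity (σB k)) ∧
    ρ = ∑ k, (p k : ℂ) • (σA k ⊗ₖ σB k)

/-- A finite POVM. -/
def IsPOVM {A ι : Type} [Fintype A] [Fintype ι] [DecidableEq A]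
    (M : ι → Matrix A A ℂ) : Prop :=
  (∀ i, (M i).PosSemidef) ∧ ∑ i, M i = 1

/-- Outcome distribution of a local product measurement. -/
def measProb {A B ι κ : Type} [Fintype A] [Fintype B]
    (M : ι → Matrix A A ℂ) (N : κ → Matrix B B ℂ)
    (ρ : Matrix (A × B) (A × B) ℂ) : ι × κ → ℝ :=
  fun x => (((M x.1 ⊗ₖ N x.2) * ρ).trace).re

/-- Completeness condition for a family of Kraus operators. -/
def IsKraus {A A' ι : Type} [Fintype A] [Fintype A'] [Fintype ι] [DecidableEq A]
    (K : ι → Matrix A' A ℂ) : Prop :=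
  ∑ i, (K i)ᴴ * K i = 1

/-- Action of the product channel Λ_A ⊗ Λ_B (given by Kraus operators) on a bipartite state. -/
def localApply {A B A' B' ι κ : Type} [Fintype A] [Fintype B] [Fintype ι] [Fintype κ]
    (K : ι → Matrix A' A ℂ) (L : κ → Matrix B' B ℂ)
    (ρ : Matrix (A × B) (A × B) ℂ) : Matrix (A' × B') (A' × B') ℂ :=
  ∑ i, ∑ j, (K i ⊗ₖ L j) * ρ * (K i ⊗ₖ L j)ᴴ

/-- Measured relative entropy distance to separable states (with optimization over local POVMs). -/
def measREE {A B : Type} [Fintype A] [Fintype B] [DecidableEq A] [DecidableEq B]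
    (ρ : Matrix (A × B) (A × B) ℂ) : ℝ :=
  sInf {x | ∃ σ : Matrix (A × B) (A × B) ℂ, IsDensity σ ∧ Separable σ ∧
    x = sSup {y | ∃ (m m' : ℕ) (M : Fin m → Matrix A A ℂ) (N : Fin m' → Matrix B B ℂ),
      IsPOVM M ∧ IsPOVM N ∧ y = klDiv (measProb M N ρ) (measProb M N σ)}}

def Gt {d : Type} [Fintype d] (t : ℝ) (ρ σ X : Matrix d d ℂ) : ℝ :=
  2 * (ρ * X).trace.re - (Xᴴ * σ * X).trace.re - t * (X * ρ * Xᴴ).trace.re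

lemma schwarz_aux {d d' κ : Type} [Fintype d] [Fintype d'] [Fintype κ] [DecidableEq d]
    (K : κ → Matrix d' d ℂ) (hK : IsKraus K) (ρ : Matrix d d ℂ) (hρ : ρ.PosSemidef)
    (X : Matrix d' d' ℂ) :
    ((∑ k, (K k)ᴴ * X * K k) * ρ * (∑ k, (K k)ᴴ * X * K k)ᴴ).trace.re ≤
      (X * (∑ k, K k * ρ * (K k)ᴴ) * Xᴴ).trace.re := by
  set Z := ∑ k, (K k)ᴴ * X * K k with hZ
  have hZ' : Zᴴ = ∑ k, (K k)ᴴ * Xᴴ * K k := by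
    rw [hZ, conjTranspose_sum]
    refine Finset.sum_congr rfl fun k _ => ?_
    simp [conjTranspose_mul, Matrix.mul_assoc]
  have h0 : 0 ≤ ∑ k, ((X * K k - K k * Z) * ρ * (X * K k - K k * Z)ᴴ).trace.re := by
    refine Finset.sum_nonneg fun k _ => ?_
    have := (hρ.mul_mul_conjTranspose_same (X * K k - K k * Z)).trace_nonneg
    exact (Complex.le_def.1 this).1
  have key : ∑ k, ((X * K k - K k * Z) * ρ * (X * K k - K k * Z)ᴴ).trace =
      (X * (∑ k, K k * ρ * (K k)ᴴ) * Xᴴ).trace - (Z * ρ * Zᴴ).trace := by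
    have h1 : ∀ k, ((X * K k - K k * Z) * ρ * (X * K k - K k * Z)ᴴ).trace =
        (X * (K k * ρ * (K k)ᴴ) * Xᴴ).trace - (((K k)ᴴ * X * K k) * (ρ * Zᴴ)).trace
        - ((Z * ρ) * ((K k)ᴴ * Xᴴ * K k)).trace + (((K k)ᴴ * K k) * (Z * ρ * Zᴴ)).trace := by
      intro k
      have e1 : (((K k)ᴴ * X * K k) * (ρ * Zᴴ)).trace = (X * K k * ρ * Zᴴ * (K k)ᴴ).trace := by
        rw [show ((K k)ᴴ * X * K k) * (ρ * Zᴴ) = (K k)ᴴ * (X * K k * ρ * Zᴴ) by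
          simp only [Matrix.mul_assoc], Matrix.trace_mul_comm]
      have e2 : ((Z * ρ) * ((K k)ᴴ * Xᴴ * K k)).trace = (K k * (Z * ρ * (K k)ᴴ * Xᴴ)).trace := by
        rw [Matrix.trace_mul_comm (K k)]
        simp only [Matrix.mul_assoc]
      have e3 : (((K k)ᴴ * K k) * (Z * ρ * Zᴴ)).trace = (K k * (Z * ρ * Zᴴ) * (K k)ᴴ).trace := by
        rw [Matrix.mul_assoc, Matrix.trace_mul_comm]
      rw [e1, e2, e3, ← Matrix.trace_sub, ← Matrix.trace_sub, ← Matrix.trace_add]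
      congr 1
      simp only [conjTranspose_sub, conjTranspose_mul, Matrix.sub_mul, Matrix.mul_sub,
        Matrix.mul_assoc]
      abel
    have hK1 : ∑ k, (K k)ᴴ * K k = 1 := hK
    rw [Finset.sum_congr rfl fun k _ => h1 k, Finset.sum_add_distrib, Finset.sum_sub_distrib,
      Finset.sum_sub_distrib]
    simp only [← Matrix.trace_sum, ← Matrix.sum_mul, ← Matrix.mul_sum, hK1, ← hZ, ← hZ',
      Matrix.one_mul]
    rw [Matrix.mul_assoc Z ρ]
    ring
  have := congrArg Complex.re key
  rw [Complex.re_sum, Complex.sub_re] at this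
  linarith

lemma Gt_mono {d d' κ : Type} [Fintype d] [Fintype d'] [Fintype κ] [DecidableEq d]
    (K : κ → Matrix d' d ℂ) (hK : IsKraus K) (ρ σ : Matrix d d ℂ) (hρ : ρ.PosSemidef)
    (hσ : σ.PosSemidef) (X : Matrix d' d' ℂ) (t : ℝ) (ht : 0 ≤ t) :
    Gt t (∑ k, K k * ρ * (K k)ᴴ) (∑ k, K k * σ * (K k)ᴴ) X ≤
      Gt t ρ σ (∑ k, (K k)ᴴ * X * K k) := by
  have h1 := schwarz_aux K hK ρ hρ X
  have h2 := schwarz_aux K hK σ hσ Xᴴ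
  have hZ' : (∑ k, (K k)ᴴ * X * K k)ᴴ = ∑ k, (K k)ᴴ * Xᴴ * K k := by
    rw [conjTranspose_sum]
    refine Finset.sum_congr rfl fun k _ => ?_
    simp [conjTranspose_mul, Matrix.mul_assoc]
  rw [← hZ'] at h2
  simp only [conjTranspose_conjTranspose] at h2
  have h3 : ((∑ k, K k * ρ * (K k)ᴴ) * X).trace = (ρ * (∑ k, (K k)ᴴ * X * K k)).trace := by
    rw [Matrix.sum_mul, Matrix.mul_sum, Matrix.trace_sum, Matrix.trace_sum]
    refine Finset.sum_congr rfl fun k _ => ?_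
    rw [Matrix.mul_assoc, Matrix.mul_assoc, Matrix.trace_mul_comm]
    simp only [Matrix.mul_assoc]
  unfold Gt
  rw [h3]
  have := mul_le_mul_of_nonneg_left h1 ht
  linarith

def Ft {d : Type} [Fintype d] (t : ℝ) (C : Matrix d d ℂ) (p q : d → ℝ) : ℝ :=
  ∑ j, ∑ i, Complex.normSq (C j i) * (p i ^ 2 / (q j + t * p i))

lemma Gt_eq {d : Type} [Fintype d] [DecidableEq d] (t : ℝ) (U V Y : Matrix d d ℂ)
    (hU : Uᴴ * U = 1) (hV : Vᴴ * V = 1) (p q : d → ℝ) :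
    Gt t (U * diagonal (fun i => (p i : ℂ)) * Uᴴ) (V * diagonal (fun i => (q i : ℂ)) * Vᴴ)
      (V * Y * Uᴴ) = ∑ j, ∑ i, (2 * p i * (star ((Vᴴ * U) j i) * Y j i).re
        - (q j + t * p i) * Complex.normSq (Y j i)) := by
  have hU' : ∀ M : Matrix d d ℂ, Uᴴ * (U * M) = M := fun M => by
    rw [← Matrix.mul_assoc, hU, Matrix.one_mul]
  have hV' : ∀ M : Matrix d d ℂ, Vᴴ * (V * M) = M := fun M => by
    rw [← Matrix.mul_assoc, hV, Matrix.one_mul]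
  set P := diagonal (fun i => (p i : ℂ)) with hP
  set Q := diagonal (fun i => (q i : ℂ)) with hQ
  have e1 : (U * P * Uᴴ * (V * Y * Uᴴ)).trace = (P * ((Vᴴ * U)ᴴ * Y)).trace := by
    rw [show U * P * Uᴴ * (V * Y * Uᴴ) = U * (P * Uᴴ * V * Y * Uᴴ) by
      simp only [Matrix.mul_assoc], Matrix.trace_mul_comm]
    simp only [Matrix.mul_assoc, hU, Matrix.mul_one, conjTranspose_mul, conjTranspose_conjTranspose]
  have e2 : ((V * Y * Uᴴ)ᴴ * (V * Q * Vᴴ) * (V * Y * Uᴴ)).trace = (Yᴴ * (Q * Y)).trace := by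
    simp only [conjTranspose_mul, conjTranspose_conjTranspose, Matrix.mul_assoc, hV']
    rw [Matrix.trace_mul_comm]
    simp only [Matrix.mul_assoc, hU, Matrix.mul_one]
  have e3 : ((V * Y * Uᴴ) * (U * P * Uᴴ) * (V * Y * Uᴴ)ᴴ).trace = (Y * (P * Yᴴ)).trace := by
    simp only [conjTranspose_mul, conjTranspose_conjTranspose, Matrix.mul_assoc, hU']
    rw [Matrix.trace_mul_comm]
    simp only [Matrix.mul_assoc, hV, Matrix.mul_one]
  unfold Gt
  rw [e1, e2, e3]
  have f1 : (P * ((Vᴴ * U)ᴴ * Y)).trace.re =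
      ∑ j, ∑ i, p i * (star ((Vᴴ * U) j i) * Y j i).re := by
    rw [Finset.sum_comm]
    rw [Matrix.trace, Complex.re_sum]
    refine Finset.sum_congr rfl fun i _ => ?_
    rw [Matrix.diag_apply, hP, Matrix.diagonal_mul, Matrix.mul_apply, Complex.re_ofReal_mul,
      Complex.re_sum, Finset.mul_sum]
    rfl
  have f2 : (Yᴴ * (Q * Y)).trace.re = ∑ j, ∑ i, q j * Complex.normSq (Y j i) := by
    rw [Finset.sum_comm, Matrix.trace, Complex.re_sum]
    refine Finset.sum_congr rfl fun i _ => ?_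
    rw [Matrix.diag_apply, Matrix.mul_apply, Complex.re_sum]
    refine Finset.sum_congr rfl fun j _ => ?_
    rw [hQ, Matrix.diagonal_mul, conjTranspose_apply, Complex.normSq_apply]
    simp
    ring
  have f3 : (Y * (P * Yᴴ)).trace.re = ∑ j, ∑ i, p i * Complex.normSq (Y j i) := by
    rw [Matrix.trace, Complex.re_sum]
    refine Finset.sum_congr rfl fun j _ => ?_
    rw [Matrix.diag_apply, Matrix.mul_apply, Complex.re_sum]
    refine Finset.sum_congr rfl fun i _ => ?_
    rw [hP, Matrix.diagonal_mul, conjTranspose_apply, Complex.normSq_apply]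
    simp
    ring
  rw [f1, f2, f3]
  simp only [Finset.mul_sum, ← Finset.sum_sub_distrib]
  refine Finset.sum_congr rfl fun j _ => Finset.sum_congr rfl fun i _ => ?_
  ring

lemma scalar_upper (p q t : ℝ) (hp : 0 ≤ p) (hq : 0 ≤ q) (ht : 0 < t) (c y : ℂ) :
    2 * p * (star c * y).re - (q + t * p) * Complex.normSq y ≤
      Complex.normSq c * (p ^ 2 / (q + t * p)) := by
  rcases hp.eq_or_lt with rfl | hp
  · have := mul_nonneg hq (Complex.normSq_nonneg y)
    simp; linarith
  · have hs : 0 < q + t * p := by positivity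
    rw [mul_div_assoc', le_div_iff₀ hs]
    simp only [Complex.normSq_apply, Complex.star_def, Complex.mul_re, Complex.conj_re,
      Complex.conj_im]
    generalize q + t * p = s at *
    nlinarith [sq_nonneg (s * y.re - p * c.re), sq_nonneg (s * y.im - p * c.im)]

lemma scalar_attain (p q t : ℝ) (hp : 0 ≤ p) (hq : 0 ≤ q) (ht : 0 < t) (c : ℂ) :
    2 * p * (star c * ((p / (q + t * p) : ℝ) * c)).re
      - (q + t * p) * Complex.normSq ((p / (q + t * p) : ℝ) * c) =
      Complex.normSq c * (p ^ 2 / (q + t * p)) := by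
  rcases hp.eq_or_lt with rfl | hp
  · simp
  · have hs : q + t * p ≠ 0 := by positivity
    rw [Complex.normSq_mul, Complex.normSq_ofReal]
    have : (star c * ((p / (q + t * p) : ℝ) * c)) =
      ((p / (q + t * p) * Complex.normSq c : ℝ) : ℂ) := by
      rw [Complex.ofReal_mul, Complex.normSq_eq_conj_mul_self, Complex.star_def]; ring
    rw [this, Complex.ofReal_re]
    field_simp
    ring

lemma Ft_mono {d d' κ : Type} [Fintype d] [Fintype d'] [Fintype κ] [DecidableEq d]
    [DecidableEq d']
    (K : κ → Matrix d' d ℂ) (hK : IsKraus K)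
    (U V : Matrix d d ℂ) (hU : Uᴴ * U = 1) (hV : Vᴴ * V = 1) (p q : d → ℝ)
    (hp : ∀ i, 0 ≤ p i) (hq : ∀ i, 0 ≤ q i)
    (U' V' : Matrix d' d' ℂ) (hU' : U'ᴴ * U' = 1) (hV' : V'ᴴ * V' = 1) (p' q' : d' → ℝ)
    (hp' : ∀ i, 0 ≤ p' i) (hq' : ∀ i, 0 ≤ q' i)
    (h1 : ∑ k, K k * (U * diagonal (fun i => (p i : ℂ)) * Uᴴ) * (K k)ᴴ
      = U' * diagonal (fun i => (p' i : ℂ)) * U'ᴴ)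
    (h2 : ∑ k, K k * (V * diagonal (fun i => (q i : ℂ)) * Vᴴ) * (K k)ᴴ
      = V' * diagonal (fun i => (q' i : ℂ)) * V'ᴴ) (t : ℝ) (ht : 0 < t) :
    Ft t (V'ᴴ * U') p' q' ≤ Ft t (Vᴴ * U) p q := by
  have pd : ∀ (W : Matrix d d ℂ) (r : d → ℝ), (∀ i, 0 ≤ r i) →
      (W * diagonal (fun i => (r i : ℂ)) * Wᴴ).PosSemidef := by
    intro W r hr
    refine Matrix.PosSemidef.mul_mul_conjTranspose_same ?_ W
    refine Matrix.PosSemidef.diagonal fun i => ?_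
    simpa using hr i
  have hUU := mul_eq_one_comm.1 hU
  have hVV := mul_eq_one_comm.1 hV
  let Y : Matrix d' d' ℂ := Matrix.of fun j i => ((p' i / (q' j + t * p' i) : ℝ) : ℂ) * (V'ᴴ * U') j i
  have a1 : Ft t (V'ᴴ * U') p' q' = Gt t (U' * diagonal (fun i => (p' i : ℂ)) * U'ᴴ)
      (V' * diagonal (fun i => (q' i : ℂ)) * V'ᴴ) (V' * Y * U'ᴴ) := by
    rw [Gt_eq t U' V' Y hU' hV']
    refine Finset.sum_congr rfl fun j _ => Finset.sum_congr rfl fun i _ => ?_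
    exact (scalar_attain (p' i) (q' j) t (hp' i) (hq' j) ht _).symm
  rw [a1, ← h1, ← h2]
  refine (Gt_mono K hK _ _ (pd U p hp) (pd V q hq) _ t ht.le).trans ?_
  generalize ∑ k, (K k)ᴴ * (V' * Y * U'ᴴ) * K k = X
  have : X = V * (Vᴴ * X * U) * Uᴴ := by
    rw [show V * (Vᴴ * X * U) * Uᴴ = (V * Vᴴ) * X * (U * Uᴴ) by simp only [Matrix.mul_assoc],
      hUU, hVV, Matrix.one_mul, Matrix.mul_one]
  rw [this, Gt_eq t U V _ hU hV]
  refine Finset.sum_le_sum fun j _ => Finset.sum_le_sum fun i _ => ?_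
  exact scalar_upper (p i) (q j) t (hp i) (hq j) ht _ _

def PhiT {d : Type} [Fintype d] (C : Matrix d d ℂ) (p q : d → ℝ) (T : ℝ) : ℝ :=
  ∑ j, ∑ i, Complex.normSq (C j i) * (p i * (Real.log (q j + T * p i) - Real.log (q j)))

def RE {d : Type} [Fintype d] (C : Matrix d d ℂ) (p q : d → ℝ) : ℝ :=
  ∑ j, ∑ i, Complex.normSq (C j i) * (p i * (Real.log (p i) - Real.log (q j)))

lemma PhiT_zero {d : Type} [Fintype d] (C : Matrix d d ℂ) (p q : d → ℝ) : PhiT C p q 0 = 0 := by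
  simp [PhiT]

lemma PhiT_deriv {d : Type} [Fintype d] (C : Matrix d d ℂ) (p q : d → ℝ)
    (hp : ∀ i, 0 ≤ p i) (hq : ∀ i, 0 ≤ q i) (T : ℝ) (hT : 0 < T) :
    HasDerivAt (PhiT C p q) (Ft T C p q) T := by
  unfold PhiT Ft
  refine HasDerivAt.fun_sum fun j _ => HasDerivAt.fun_sum fun i _ => ?_
  refine HasDerivAt.const_mul _ ?_
  rcases (hp i).eq_or_lt with h | h
  · simp only [← h]
    simpa using hasDerivAt_const T (0 : ℝ)
  · have hs : q j + T * p i ≠ 0 := by have := hq j; positivity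
    have h1 : HasDerivAt (fun T : ℝ => q j + T * p i) (p i) T := by
      simpa using ((hasDerivAt_id T).mul_const (p i)).const_add (q j)
    have h2 := ((h1.log hs).sub_const (Real.log (q j))).const_mul (p i)
    convert! h2 using 1
    ring

lemma PhiT_cont {d : Type} [Fintype d] (C : Matrix d d ℂ) (p q : d → ℝ)
    (hp : ∀ i, 0 ≤ p i) (hq : ∀ i, 0 ≤ q i)
    (hs : ∀ j i, q j = 0 → Complex.normSq (C j i) * p i = 0) :
    ContinuousOn (PhiT C p q) (Set.Ici 0) := by
  unfold PhiT
  refine continuousOn_finsetSum _ fun j _ => continuousOn_finsetSum _ fun i _ => ?_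
  by_cases h : Complex.normSq (C j i) * p i = 0
  · simp only [← mul_assoc, h, zero_mul]
    exact continuousOn_const
  · have hq0 : q j ≠ 0 := fun h0 => h (hs j i h0)
    have hq1 : 0 < q j := lt_of_le_of_ne (hq j) hq0.symm
    refine continuousOn_const.mul (continuousOn_const.mul (ContinuousOn.sub ?_ continuousOn_const))
    refine ContinuousOn.log (by fun_prop) ?_
    intro T hT
    have := hp i
    have hT : 0 ≤ T := hT
    positivity

lemma PhiT_lim {d : Type} [Fintype d] (C : Matrix d d ℂ) (p q : d → ℝ)
    (hp : ∀ i, 0 ≤ p i) :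
    Tendsto (fun T => PhiT C p q T - (∑ j, ∑ i, Complex.normSq (C j i) * p i) * Real.log T)
      atTop (𝓝 (RE C p q)) := by
  have : ∀ T, PhiT C p q T - (∑ j, ∑ i, Complex.normSq (C j i) * p i) * Real.log T =
      ∑ j, ∑ i, Complex.normSq (C j i) *
        (p i * (Real.log (q j + T * p i) - Real.log T - Real.log (q j))) := by
    intro T
    unfold PhiT
    simp only [Finset.sum_mul, ← Finset.sum_sub_distrib]
    refine Finset.sum_congr rfl fun j _ => Finset.sum_congr rfl fun i _ => ?_
    ring
  simp only [this]
  unfold RE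
  refine tendsto_finsetSum _ fun j _ => tendsto_finsetSum _ fun i _ => ?_
  refine Tendsto.const_mul _ ?_
  rcases (hp i).eq_or_lt with h | h
  · simp [← h]
  · refine Tendsto.const_mul _ (Tendsto.sub_const ?_ _)
    have h1 : Tendsto (fun T : ℝ => q j / T + p i) atTop (𝓝 (p i)) := by
      simpa using (tendsto_id.const_div_atTop (q j)).add_const (p i)
    have h2 := h1.log h.ne'
    refine h2.congr' ?_
    have h3 := h1.eventually (lt_mem_nhds h)
    filter_upwards [eventually_gt_atTop 0, h3] with T hT hT2
    have : q j + T * p i = T * (q j / T + p i) := by field_simp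
    rw [this, Real.log_mul hT.ne' hT2.ne']
    ring

lemma RE_mono {d d' : Type} [Fintype d] [Fintype d']
    (C : Matrix d d ℂ) (p q : d → ℝ) (hp : ∀ i, 0 ≤ p i) (hq : ∀ i, 0 ≤ q i)
    (hs : ∀ j i, q j = 0 → Complex.normSq (C j i) * p i = 0)
    (C' : Matrix d' d' ℂ) (p' q' : d' → ℝ) (hp' : ∀ i, 0 ≤ p' i) (hq' : ∀ i, 0 ≤ q' i)
    (hs' : ∀ j i, q' j = 0 → Complex.normSq (C' j i) * p' i = 0)
    (hsum : ∑ j, ∑ i, Complex.normSq (C j i) * p i = ∑ j, ∑ i, Complex.normSq (C' j i) * p' i)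
    (hF : ∀ t, 0 < t → Ft t C' p' q' ≤ Ft t C p q) :
    RE C' p' q' ≤ RE C p q := by
  have hm : MonotoneOn (fun T => PhiT C p q T - PhiT C' p' q' T) (Set.Ici 0) := by
    have hd : ∀ T ∈ interior (Set.Ici (0 : ℝ)),
        HasDerivAt (fun T => PhiT C p q T - PhiT C' p' q' T) (Ft T C p q - Ft T C' p' q') T := by
      intro T hT
      rw [interior_Ici] at hT
      exact (PhiT_deriv C p q hp hq T hT).sub (PhiT_deriv C' p' q' hp' hq' T hT)
    refine monotoneOn_of_deriv_nonneg (convex_Ici 0)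
      ((PhiT_cont C p q hp hq hs).sub (PhiT_cont C' p' q' hp' hq' hs'))
      (fun T hT => (hd T hT).differentiableAt.differentiableWithinAt) ?_
    intro T hT
    rw [(hd T hT).deriv]
    rw [interior_Ici] at hT
    linarith [hF T hT]
  refine le_of_tendsto_of_tendsto (PhiT_lim C' p' q' hp') (PhiT_lim C p q hp) ?_
  filter_upwards [eventually_ge_atTop 0] with T hT
  have := hm (Set.mem_Ici.2 le_rfl) (Set.mem_Ici.2 hT) hT
  simp only [PhiT_zero] at this
  rw [hsum]
  linarith

lemma ptraceB_posSemidef {A B : Type} [Fintype A] [Fintype B]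
    {τ : Matrix (A × B) (A × B) ℂ} (h : τ.PosSemidef) : (ptraceB τ).PosSemidef := by
  have : ptraceB τ = ∑ b, τ.submatrix (fun a => (a, b)) (fun a => (a, b)) := by
    ext a a'
    simp [ptraceB, Matrix.sum_apply]
  rw [this]
  exact Matrix.posSemidef_sum _ fun b _ => h.submatrix _

lemma ptraceA_posSemidef {A B : Type} [Fintype A] [Fintype B]
    {τ : Matrix (A × B) (A × B) ℂ} (h : τ.PosSemidef) : (ptraceA τ).PosSemidef := by
  have : ptraceA τ = ∑ a, τ.submatrix (fun b => (a, b)) (fun b => (a, b)) := by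
    ext a a'
    simp [ptraceA, Matrix.sum_apply]
  rw [this]
  exact Matrix.posSemidef_sum _ fun b _ => h.submatrix _

lemma ptraceB_sum {A B κ : Type} [Fintype B] [Fintype κ]
    (X : κ → Matrix (A × B) (A × B) ℂ) : ptraceB (∑ k, X k) = ∑ k, ptraceB (X k) := by
  ext a a'
  simp only [ptraceB, Matrix.sum_apply, Matrix.of_apply]
  rw [Finset.sum_comm]

lemma ptraceA_sum {A B κ : Type} [Fintype A] [Fintype κ]
    (X : κ → Matrix (A × B) (A × B) ℂ) : ptraceA (∑ k, X k) = ∑ k, ptraceA (X k) := by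
  ext a a'
  simp only [ptraceA, Matrix.sum_apply, Matrix.of_apply]
  rw [Finset.sum_comm]

lemma ptraceB_conj {A A' B B' : Type} [Fintype A] [Fintype B] [Fintype B']
    [DecidableEq A] [DecidableEq B] [DecidableEq B']
    (M : Matrix A' A ℂ) (N : Matrix B' B ℂ) (M' : Matrix A A' ℂ) (N' : Matrix B B' ℂ)
    (τ : Matrix (A × B) (A × B) ℂ) :
    ptraceB ((M ⊗ₖ N) * τ * (M' ⊗ₖ N')) =
      M * ptraceB (τ * ((1 : Matrix A A ℂ) ⊗ₖ (N' * N))) * M' := by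
  have e1 : ∀ Y : Matrix (A × B') (A × B') ℂ,
      ptraceB ((M ⊗ₖ (1 : Matrix B' B' ℂ)) * Y * (M' ⊗ₖ (1 : Matrix B' B' ℂ))) =
        M * ptraceB Y * M' := by
    intro Y
    ext a a'
    simp only [ptraceB, Matrix.of_apply, Matrix.mul_apply, Fintype.sum_prod_type,
      Matrix.kroneckerMap_apply, Matrix.one_apply, mul_ite, mul_one, mul_zero, ite_mul, zero_mul,
      Finset.sum_ite_eq, Finset.sum_ite_eq', Finset.mem_univ, if_true, Finset.sum_mul,
      Finset.mul_sum]
    rw [Finset.sum_comm]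
    refine Finset.sum_congr rfl fun x _ => ?_
    rw [Finset.sum_comm]
  have e2 : ∀ Y : Matrix (A × B) (A × B') ℂ,
      ptraceB (((1 : Matrix A A ℂ) ⊗ₖ N) * Y) = ptraceB (Y * ((1 : Matrix A A ℂ) ⊗ₖ N)) := by
    intro Y
    ext a a'
    simp only [ptraceB, Matrix.of_apply, Matrix.mul_apply, Fintype.sum_prod_type_right,
      Matrix.kroneckerMap_apply, Matrix.one_apply, mul_ite, mul_one, mul_zero, ite_mul, zero_mul,
      one_mul,
      Finset.sum_ite_eq, Finset.sum_ite_eq', Finset.mem_univ, if_true]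
    rw [Finset.sum_comm]
    refine Finset.sum_congr rfl fun x _ => Finset.sum_congr rfl fun y _ => mul_comm _ _
  have hM : (M ⊗ₖ N) = (M ⊗ₖ (1 : Matrix B' B' ℂ)) * ((1 : Matrix A A ℂ) ⊗ₖ N) := by
    rw [← Matrix.mul_kronecker_mul, Matrix.mul_one, Matrix.one_mul]
  have hM' : (M' ⊗ₖ N') = ((1 : Matrix A A ℂ) ⊗ₖ N') * (M' ⊗ₖ (1 : Matrix B' B' ℂ)) := by
    rw [← Matrix.mul_kronecker_mul, Matrix.mul_one, Matrix.one_mul]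
  have hN : ((1 : Matrix A A ℂ) ⊗ₖ (N' * N)) =
      ((1 : Matrix A A ℂ) ⊗ₖ N') * ((1 : Matrix A A ℂ) ⊗ₖ N) := by
    rw [← Matrix.mul_kronecker_mul, Matrix.one_mul]
  rw [hM, hM', hN, ← Matrix.mul_assoc τ, ← e2, ← e1]
  simp only [Matrix.mul_assoc]

lemma ptraceA_conj {A A' B B' : Type} [Fintype A] [Fintype B] [Fintype A']
    [DecidableEq A] [DecidableEq B] [DecidableEq A']
    (M : Matrix A' A ℂ) (N : Matrix B' B ℂ) (M' : Matrix A A' ℂ) (N' : Matrix B B' ℂ)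
    (τ : Matrix (A × B) (A × B) ℂ) :
    ptraceA ((M ⊗ₖ N) * τ * (M' ⊗ₖ N')) =
      N * ptraceA (τ * ((M' * M) ⊗ₖ (1 : Matrix B B ℂ))) * N' := by
  have e1 : ∀ Y : Matrix (A' × B) (A' × B) ℂ,
      ptraceA (((1 : Matrix A' A' ℂ) ⊗ₖ N) * Y * ((1 : Matrix A' A' ℂ) ⊗ₖ N')) =
        N * ptraceA Y * N' := by
    intro Y
    ext a a'
    simp only [ptraceA, Matrix.of_apply, Matrix.mul_apply, Fintype.sum_prod_type_right,
      Matrix.kroneckerMap_apply, Matrix.one_apply, mul_ite, mul_one, mul_zero, ite_mul, zero_mul,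
      one_mul,
      Finset.sum_ite_eq, Finset.sum_ite_eq', Finset.mem_univ, if_true, Finset.sum_mul,
      Finset.mul_sum]
    rw [Finset.sum_comm]
    refine Finset.sum_congr rfl fun x _ => ?_
    rw [Finset.sum_comm]
  have e2 : ∀ Y : Matrix (A × B) (A' × B) ℂ,
      ptraceA ((M ⊗ₖ (1 : Matrix B B ℂ)) * Y) = ptraceA (Y * (M ⊗ₖ (1 : Matrix B B ℂ))) := by
    intro Y
    ext a a'
    simp only [ptraceA, Matrix.of_apply, Matrix.mul_apply, Fintype.sum_prod_type,
      Matrix.kroneckerMap_apply, Matrix.one_apply, mul_ite, mul_one, mul_zero, ite_mul, zero_mul,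
      one_mul,
      Finset.sum_ite_eq, Finset.sum_ite_eq', Finset.mem_univ, if_true]
    rw [Finset.sum_comm]
    refine Finset.sum_congr rfl fun x _ => Finset.sum_congr rfl fun y _ => mul_comm _ _
  have hM : (M ⊗ₖ N) = ((1 : Matrix A' A' ℂ) ⊗ₖ N) * (M ⊗ₖ (1 : Matrix B B ℂ)) := by
    rw [← Matrix.mul_kronecker_mul, Matrix.mul_one, Matrix.one_mul]
  have hM' : (M' ⊗ₖ N') = (M' ⊗ₖ (1 : Matrix B B ℂ)) * ((1 : Matrix A' A' ℂ) ⊗ₖ N') := by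
    rw [← Matrix.mul_kronecker_mul, Matrix.mul_one, Matrix.one_mul]
  have hN : ((M' * M) ⊗ₖ (1 : Matrix B B ℂ)) =
      (M' ⊗ₖ (1 : Matrix B B ℂ)) * (M ⊗ₖ (1 : Matrix B B ℂ)) := by
    rw [← Matrix.mul_kronecker_mul, Matrix.one_mul]
  rw [hM, hM', hN, ← Matrix.mul_assoc τ, ← e2, ← e1]
  simp only [Matrix.mul_assoc]

lemma spectral_ex {d : Type} [Fintype d] [DecidableEq d] (ρ : Matrix d d ℂ) (h : ρ.PosSemidef) :
    ∃ (U : Matrix d d ℂ) (p : d → ℝ), Uᴴ * U = 1 ∧ (∀ i, 0 ≤ p i) ∧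
      ρ = U * diagonal (fun i => (p i : ℂ)) * Uᴴ ∧
      Real.log 2 * vnEntropy ρ = -∑ i, p i * Real.log (p i) := by
  refine ⟨h.1.eigenvectorUnitary, h.1.eigenvalues, ?_, h.eigenvalues_nonneg, ?_, ?_⟩
  · rw [← star_eq_conjTranspose]
    exact Unitary.coe_star_mul_self _
  · have := h.1.spectral_theorem
    rw [Unitary.conjStarAlgAut_apply] at this
    exact this
  · have h2 : Real.log 2 ≠ 0 := (Real.log_pos one_lt_two).ne'
    rw [vnEntropy, dif_pos h.1, mul_neg, Finset.mul_sum]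
    congr 1
    refine Finset.sum_congr rfl fun i _ => ?_
    rw [Real.logb]
    field_simp

lemma conj_diag {d : Type} [Fintype d] [DecidableEq d] (U V : Matrix d d ℂ) (p : d → ℝ) (j : d) :
    ((Vᴴ * (U * diagonal (fun i => (p i : ℂ)) * Uᴴ) * V) j j) =
      ((∑ i, Complex.normSq ((Vᴴ * U) j i) * p i : ℝ) : ℂ) := by
  rw [show Vᴴ * (U * diagonal (fun i => (p i : ℂ)) * Uᴴ) * V =
    (Vᴴ * U) * (diagonal (fun i => (p i : ℂ)) * (Vᴴ * U)ᴴ) by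
      simp only [Matrix.mul_assoc, conjTranspose_mul, conjTranspose_conjTranspose]]
  generalize Vᴴ * U = C
  rw [Matrix.mul_apply, Complex.ofReal_sum]
  refine Finset.sum_congr rfl fun i _ => ?_
  rw [Matrix.diagonal_mul, conjTranspose_apply, Complex.ofReal_mul,
    Complex.normSq_eq_conj_mul_self, Complex.star_def]
  ring

lemma col_sum {d : Type} [Fintype d] [DecidableEq d] (C : Matrix d d ℂ) (h : Cᴴ * C = 1) (i : d) :
    ∑ j, Complex.normSq (C j i) = 1 := by
  have := congrFun (congrFun h i) i
  rw [Matrix.mul_apply, Matrix.one_apply_eq] at this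
  have h2 : ((∑ j, Complex.normSq (C j i) : ℝ) : ℂ) = 1 := by
    rw [← this, Complex.ofReal_sum]
    refine Finset.sum_congr rfl fun j _ => ?_
    rw [conjTranspose_apply, Complex.normSq_eq_conj_mul_self, Complex.star_def]
  exact_mod_cast h2

lemma mutInfo_repr {A B : Type} [Fintype A] [Fintype B] [DecidableEq A] [DecidableEq B]
    (τ : Matrix (A × B) (A × B) ℂ) (h : IsDensity τ) :
    ∃ (U V : Matrix (A × B) (A × B) ℂ) (p q : A × B → ℝ), Uᴴ * U = 1 ∧ Vᴴ * V = 1 ∧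
      (∀ i, 0 ≤ p i) ∧ (∀ i, 0 ≤ q i) ∧
      τ = U * diagonal (fun i => (p i : ℂ)) * Uᴴ ∧
      ptraceB τ ⊗ₖ ptraceA τ = V * diagonal (fun i => (q i : ℂ)) * Vᴴ ∧
      (∀ j i, q j = 0 → Complex.normSq ((Vᴴ * U) j i) * p i = 0) ∧
      ∑ j, ∑ i, Complex.normSq ((Vᴴ * U) j i) * p i = 1 ∧
      RE (Vᴴ * U) p q = Real.log 2 * mutInfo τ := by
  obtain ⟨U, p, hU, hp, hτ, hS⟩ := spectral_ex τ h.1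
  obtain ⟨VA, qA, hVA, hqA, hA, hSA⟩ := spectral_ex _ (ptraceB_posSemidef h.1)
  obtain ⟨VB, qB, hVB, hqB, hB, hSB⟩ := spectral_ex _ (ptraceA_posSemidef h.1)
  set V := VA ⊗ₖ VB with hVdef
  have hV : Vᴴ * V = 1 := by
    rw [hVdef, conjTranspose_kronecker, ← Matrix.mul_kronecker_mul, hVA, hVB, one_kronecker_one]
  have hUU := mul_eq_one_comm.1 hU
  have hVV := mul_eq_one_comm.1 hV
  have hVAA := mul_eq_one_comm.1 hVA
  have hVBB := mul_eq_one_comm.1 hVB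
  have hC : (Vᴴ * U)ᴴ * (Vᴴ * U) = 1 := by
    rw [conjTranspose_mul, conjTranspose_conjTranspose,
      show Uᴴ * V * (Vᴴ * U) = Uᴴ * (V * Vᴴ) * U by simp only [Matrix.mul_assoc], hVV,
      Matrix.mul_one, hU]
  set C := Vᴴ * U with hCdef
  let r : A × B → ℝ := fun j => ∑ i, Complex.normSq (C j i) * p i
  have hr : ∀ j, (Vᴴ * τ * V) j j = (r j : ℂ) := fun j => by
    rw [hτ]; exact conj_diag U V p j
  have hr0 : ∀ j, 0 ≤ r j := fun j =>
    Finset.sum_nonneg fun i _ => mul_nonneg (Complex.normSq_nonneg _) (hp i)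
  have hrA : ∀ a, ∑ b, r (a, b) = qA a := by
    intro a
    have e : ptraceB (Vᴴ * τ * V) = diagonal (fun i => (qA i : ℂ)) := by
      rw [hVdef, conjTranspose_kronecker, ptraceB_conj, hVBB, one_kronecker_one, Matrix.mul_one, hA]
      rw [show VAᴴ * (VA * diagonal (fun i => (qA i : ℂ)) * VAᴴ) * VA =
        (VAᴴ * VA) * diagonal (fun i => (qA i : ℂ)) * (VAᴴ * VA) by
          simp only [Matrix.mul_assoc], hVA, Matrix.one_mul, Matrix.mul_one]
    have := congrFun (congrFun e a) a
    rw [ptraceB, Matrix.of_apply, diagonal_apply_eq] at this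
    simp only [hr] at this
    exact_mod_cast this
  have hrB : ∀ b, ∑ a, r (a, b) = qB b := by
    intro b
    have e : ptraceA (Vᴴ * τ * V) = diagonal (fun i => (qB i : ℂ)) := by
      rw [hVdef, conjTranspose_kronecker, ptraceA_conj, hVAA, one_kronecker_one, Matrix.mul_one, hB]
      rw [show VBᴴ * (VB * diagonal (fun i => (qB i : ℂ)) * VBᴴ) * VB =
        (VBᴴ * VB) * diagonal (fun i => (qB i : ℂ)) * (VBᴴ * VB) by
          simp only [Matrix.mul_assoc], hVB, Matrix.one_mul, Matrix.mul_one]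
    have := congrFun (congrFun e b) b
    rw [ptraceA, Matrix.of_apply, diagonal_apply_eq] at this
    simp only [hr] at this
    exact_mod_cast this
  have hzA : ∀ a b, qA a = 0 → r (a, b) = 0 := by
    intro a b h0
    rw [← hrA] at h0
    exact (Finset.sum_eq_zero_iff_of_nonneg (fun b _ => hr0 (a, b))).1 h0 b (Finset.mem_univ _)
  have hzB : ∀ a b, qB b = 0 → r (a, b) = 0 := by
    intro a b h0
    rw [← hrB] at h0
    exact (Finset.sum_eq_zero_iff_of_nonneg (fun a _ => hr0 (a, b))).1 h0 a (Finset.mem_univ _)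
  have hsump : ∑ i, p i = 1 := by
    have h1 : (U * diagonal (fun i => (p i : ℂ)) * Uᴴ).trace = 1 := by rw [← hτ]; exact h.2
    rw [Matrix.trace_mul_comm, ← Matrix.mul_assoc, hU, Matrix.one_mul, trace_diagonal] at h1
    exact_mod_cast h1
  refine ⟨U, V, p, fun x => qA x.1 * qB x.2, hU, hV, hp, fun x => mul_nonneg (hqA _) (hqB _), hτ,
    ?_, ?_, ?_, ?_⟩
  · rw [hA, hB, Matrix.mul_kronecker_mul, Matrix.mul_kronecker_mul, diagonal_kronecker_diagonal,
      ← conjTranspose_kronecker]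
    simp
    rfl
  · rintro ⟨a, b⟩ i h0
    have : r (a, b) = 0 := by
      rcases mul_eq_zero.1 h0 with h0 | h0
      · exact hzA a b h0
      · exact hzB a b h0
    exact (Finset.sum_eq_zero_iff_of_nonneg
      (fun i _ => mul_nonneg (Complex.normSq_nonneg _) (hp i))).1 this i (Finset.mem_univ _)
  · change ∑ j, ∑ i, Complex.normSq (C j i) * p i = 1
    rw [Finset.sum_comm]
    simp only [← Finset.sum_mul, col_sum C hC, one_mul, hsump]
  · have e1 : RE C p (fun x => qA x.1 * qB x.2) = ∑ i, p i * Real.log (p i) -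
        ∑ j, r j * Real.log (qA j.1 * qB j.2) := by
      unfold RE
      simp only [mul_sub, Finset.sum_sub_distrib]
      congr 1
      · rw [Finset.sum_comm]
        simp only [← Finset.sum_mul, col_sum C hC, one_mul]
      · refine Finset.sum_congr rfl fun j _ => ?_
        simp only [r, Finset.sum_mul, mul_assoc]
    have e2 : ∑ j, r j * Real.log (qA j.1 * qB j.2) =
        ∑ a, qA a * Real.log (qA a) + ∑ b, qB b * Real.log (qB b) := by
      have : ∀ j : A × B, r j * Real.log (qA j.1 * qB j.2) =
          r j * Real.log (qA j.1) + r j * Real.log (qB j.2) := by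
        rintro ⟨a, b⟩
        by_cases h1 : qA a = 0
        · simp [hzA a b h1]
        by_cases h2 : qB b = 0
        · simp [hzB a b h2]
        rw [Real.log_mul h1 h2]; ring
      rw [Finset.sum_congr rfl fun j _ => this j, Finset.sum_add_distrib]
      congr 1
      · rw [Fintype.sum_prod_type]
        refine Finset.sum_congr rfl fun a _ => ?_
        refine (Finset.sum_mul Finset.univ (fun b => r (a, b)) (Real.log (qA a))).symm.trans ?_
        rw [hrA]
      · rw [Fintype.sum_prod_type_right]
        refine Finset.sum_congr rfl fun a _ => ?_
        refine (Finset.sum_mul Finset.univ (fun x => r (x, a)) (Real.log (qB a))).symm.trans ?_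
        rw [hrB]
    rw [e1, e2, mutInfo]
    linarith

lemma isKraus_kron {A B A' B' ι κ : Type}
    [Fintype A] [Fintype B] [Fintype A'] [Fintype B'] [Fintype ι] [Fintype κ]
    [DecidableEq A] [DecidableEq B]
    (K : ι → Matrix A' A ℂ) (L : κ → Matrix B' B ℂ) (hK : IsKraus K) (hL : IsKraus L) :
    IsKraus (fun x : ι × κ => K x.1 ⊗ₖ L x.2) := by
  unfold IsKraus at *
  simp only [conjTranspose_kronecker, ← Matrix.mul_kronecker_mul, Fintype.sum_prod_type]
  rw [← one_kronecker_one, ← hK, ← hL]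
  ext x y
  simp only [Matrix.sum_apply, Matrix.kroneckerMap_apply, Finset.sum_mul_sum]

lemma localApply_eq {A B A' B' ι κ : Type}
    [Fintype A] [Fintype B] [Fintype ι] [Fintype κ]
    (K : ι → Matrix A' A ℂ) (L : κ → Matrix B' B ℂ) (τ : Matrix (A × B) (A × B) ℂ) :
    localApply K L τ = ∑ x : ι × κ, (K x.1 ⊗ₖ L x.2) * τ * (K x.1 ⊗ₖ L x.2)ᴴ := by
  rw [localApply, Fintype.sum_prod_type]

lemma kraus_density {d d' κ : Type} [Fintype d] [Fintype d'] [Fintype κ] [DecidableEq d]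
    (K : κ → Matrix d' d ℂ) (hK : IsKraus K) (τ : Matrix d d ℂ) (h : IsDensity τ) :
    IsDensity (∑ k, K k * τ * (K k)ᴴ) := by
  refine ⟨Matrix.posSemidef_sum _ fun k _ => h.1.mul_mul_conjTranspose_same _, ?_⟩
  have hK1 : ∑ k, (K k)ᴴ * K k = 1 := hK
  rw [Matrix.trace_sum]
  have : ∀ k, (K k * τ * (K k)ᴴ).trace = ((K k)ᴴ * K k * τ).trace := fun k => by
    rw [Matrix.trace_mul_comm, Matrix.mul_assoc]
  rw [Finset.sum_congr rfl fun k _ => this k, ← Matrix.trace_sum, ← Matrix.sum_mul, hK1,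
    Matrix.one_mul, h.2]

lemma localApply_density {A B A' B' ι κ : Type}
    [Fintype A] [Fintype B] [Fintype A'] [Fintype B'] [Fintype ι] [Fintype κ]
    [DecidableEq A] [DecidableEq B]
    (K : ι → Matrix A' A ℂ) (L : κ → Matrix B' B ℂ) (hK : IsKraus K) (hL : IsKraus L)
    (τ : Matrix (A × B) (A × B) ℂ) (h : IsDensity τ) : IsDensity (localApply K L τ) := by
  rw [localApply_eq]
  exact kraus_density _ (isKraus_kron K L hK hL) τ h

lemma ptraceB_mul_sum {A B κ : Type} [Fintype A] [Fintype B] [Fintype κ] [DecidableEq A]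
    [DecidableEq B] (N : κ → Matrix B B ℂ) (hN : ∑ k, N k = 1) (τ : Matrix (A × B) (A × B) ℂ) :
    ∑ k, ptraceB (τ * ((1 : Matrix A A ℂ) ⊗ₖ N k)) = ptraceB τ := by
  rw [← ptraceB_sum, ← Matrix.mul_sum]
  have : ∑ k, ((1 : Matrix A A ℂ) ⊗ₖ N k) = 1 := by
    rw [← one_kronecker_one, ← hN]
    ext x y
    simp only [Matrix.sum_apply, Matrix.kroneckerMap_apply, Finset.mul_sum]
  rw [this, Matrix.mul_one]

lemma ptraceA_mul_sum {A B κ : Type} [Fintype A] [Fintype B] [Fintype κ] [DecidableEq A]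
    [DecidableEq B] (N : κ → Matrix A A ℂ) (hN : ∑ k, N k = 1) (τ : Matrix (A × B) (A × B) ℂ) :
    ∑ k, ptraceA (τ * (N k ⊗ₖ (1 : Matrix B B ℂ))) = ptraceA τ := by
  rw [← ptraceA_sum, ← Matrix.mul_sum]
  have : ∑ k, (N k ⊗ₖ (1 : Matrix B B ℂ)) = 1 := by
    rw [← one_kronecker_one, ← hN]
    ext x y
    simp only [Matrix.sum_apply, Matrix.kroneckerMap_apply, Finset.sum_mul]
  rw [this, Matrix.mul_one]

lemma mutInfo_mono {A B A' B' ι κ : Type}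
    [Fintype A] [Fintype B] [Fintype A'] [Fintype B'] [Fintype ι] [Fintype κ]
    [DecidableEq A] [DecidableEq B] [DecidableEq A'] [DecidableEq B']
    (K : ι → Matrix A' A ℂ) (L : κ → Matrix B' B ℂ) (hK : IsKraus K) (hL : IsKraus L)
    (τ : Matrix (A × B) (A × B) ℂ) (h : IsDensity τ) :
    mutInfo (localApply K L τ) ≤ mutInfo τ := by
  obtain ⟨U, V, p, q, hU, hV, hp, hq, h1, h2, h3, h4, h5⟩ := mutInfo_repr τ h
  obtain ⟨U', V', p', q', hU', hV', hp', hq', h1', h2', h3', h4', h5'⟩ :=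
    mutInfo_repr _ (localApply_density K L hK hL τ h)
  have hpB : ptraceB (localApply K L τ) = ∑ i, K i * ptraceB τ * (K i)ᴴ := by
    unfold localApply
    rw [ptraceB_sum]
    refine Finset.sum_congr rfl fun i _ => ?_
    rw [ptraceB_sum]
    simp only [conjTranspose_kronecker, ptraceB_conj]
    rw [← Matrix.sum_mul, ← Matrix.mul_sum, ptraceB_mul_sum _ hL]
  have hpA : ptraceA (localApply K L τ) = ∑ i, L i * ptraceA τ * (L i)ᴴ := by
    unfold localApply
    rw [Finset.sum_comm, ptraceA_sum]
    refine Finset.sum_congr rfl fun i _ => ?_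
    rw [ptraceA_sum]
    simp only [conjTranspose_kronecker, ptraceA_conj]
    rw [← Matrix.sum_mul, ← Matrix.mul_sum, ptraceA_mul_sum _ hK]
  have hprod : ptraceB (localApply K L τ) ⊗ₖ ptraceA (localApply K L τ) =
      ∑ x : ι × κ, (K x.1 ⊗ₖ L x.2) * (ptraceB τ ⊗ₖ ptraceA τ) * (K x.1 ⊗ₖ L x.2)ᴴ := by
    rw [hpB, hpA]
    simp only [conjTranspose_kronecker, ← Matrix.mul_kronecker_mul, Fintype.sum_prod_type]
    ext x y
    simp only [Matrix.sum_apply, Matrix.kroneckerMap_apply, Finset.sum_mul_sum]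
  have hF := RE_mono (Vᴴ * U) p q hp hq h3 (V'ᴴ * U') p' q' hp' hq' h3' (h4.trans h4'.symm)
    (fun t ht => Ft_mono (fun x : ι × κ => K x.1 ⊗ₖ L x.2) (isKraus_kron K L hK hL) U V hU hV p q
      hp hq U' V' hU' hV' p' q' hp' hq' (by rw [← h1, ← h1', localApply_eq])
      (by rw [← h2, ← h2', hprod]) t ht)
  rw [h5, h5'] at hF
  exact le_of_mul_le_mul_left hF (Real.log_pos one_lt_two)

def KK {A A' ι : Type} (n : ℕ) (K : ι → Matrix A' A ℂ) (f : Fin n → ι) :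
    Matrix (Fin n → A') (Fin n → A) ℂ :=
  Matrix.of fun x y => ∏ l, K (f l) (x l) (y l)

def SA {A A' ι : Type} [Fintype ι] (K : ι → Matrix A' A ℂ) (x y : A') (u v : A) : ℂ :=
  ∑ i, K i x u * star (K i y v)

lemma KK_kraus {A A' ι : Type} [Fintype A] [Fintype A'] [Fintype ι] [DecidableEq A]
    (n : ℕ) (K : ι → Matrix A' A ℂ) (hK : IsKraus K) : IsKraus (KK n K) := by
  have hK1 : ∑ k, (K k)ᴴ * K k = 1 := hK
  unfold IsKraus
  ext x y
  have h1 : ∀ a b, ∑ i, ∑ z, star (K i z a) * K i z b = (1 : Matrix A A ℂ) a b := by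
    intro a b
    rw [← hK1, Matrix.sum_apply]
    rfl
  have h2 : ∀ f : Fin n → ι, ((KK n K f)ᴴ * KK n K f) x y =
      ∏ l, ∑ z, star (K (f l) z (x l)) * K (f l) z (y l) := by
    intro f
    rw [Matrix.mul_apply, Fintype.prod_sum]
    refine Finset.sum_congr rfl fun z _ => ?_
    rw [conjTranspose_apply, KK, Matrix.of_apply, Matrix.of_apply, star_prod,
      Finset.prod_mul_distrib]
  rw [Matrix.sum_apply]
  simp only [h2]
  rw [← Fintype.prod_sum (fun l i => ∑ z, star (K i z (x l)) * K i z (y l))]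
  simp only [h1, Matrix.one_apply]
  by_cases h : x = y
  · simp [h]
  · rw [if_neg h]
    obtain ⟨l, hl⟩ := Function.ne_iff.1 h
    exact Finset.prod_eq_zero (Finset.mem_univ l) (if_neg hl)

lemma SA_KK {A A' ι : Type} [Fintype ι] (n : ℕ) (K : ι → Matrix A' A ℂ)
    (x y : Fin n → A') (u v : Fin n → A) :
    SA (KK n K) x y u v = ∏ l, SA K (x l) (y l) (u l) (v l) := by
  unfold SA
  rw [Fintype.prod_sum]
  refine Finset.sum_congr rfl fun f _ => ?_
  rw [KK, Matrix.of_apply, Matrix.of_apply, star_prod, Finset.prod_mul_distrib]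

lemma SA_trace {A A' ι : Type} [Fintype A] [Fintype A'] [Fintype ι] [DecidableEq A]
    (K : ι → Matrix A' A ℂ) (hK : IsKraus K) (u v : A) :
    ∑ x, SA K x x u v = if u = v then 1 else 0 := by
  have hK1 : ∑ k, (K k)ᴴ * K k = 1 := hK
  have := congrFun (congrFun hK1 v) u
  rw [Matrix.sum_apply, Matrix.one_apply] at this
  simp only [eq_comm (a := u), ← this]
  unfold SA
  rw [Finset.sum_comm]
  refine Finset.sum_congr rfl fun i _ => ?_
  rw [Matrix.mul_apply]
  refine Finset.sum_congr rfl fun x _ => ?_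
  rw [conjTranspose_apply, mul_comm]

lemma localApply_entry {A B A' B' ι κ : Type}
    [Fintype A] [Fintype B] [Fintype ι] [Fintype κ]
    (K : ι → Matrix A' A ℂ) (L : κ → Matrix B' B ℂ) (τ : Matrix (A × B) (A × B) ℂ)
    (x y : A' × B') :
    localApply K L τ x y = ∑ u, ∑ v, SA K x.1 y.1 u.1 v.1 * SA L x.2 y.2 u.2 v.2 * τ u v := by
  unfold localApply SA
  simp only [Matrix.sum_apply, Matrix.mul_apply, conjTranspose_apply, Matrix.kroneckerMap_apply,
    Finset.sum_mul]
  have : ∀ F : ι → κ → (A × B) → (A × B) → ℂ,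
      ∑ i, ∑ j, ∑ v, ∑ u, F i j u v = ∑ u, ∑ v, ∑ i, ∑ j, F i j u v := by
    intro F
    have e1 : ∀ i, ∑ j, ∑ v, ∑ u, F i j u v = ∑ u, ∑ v, ∑ j, F i j u v := by
      intro i
      rw [Finset.sum_comm]
      have e0 : ∀ v, ∑ j, ∑ u, F i j u v = ∑ u, ∑ j, F i j u v := fun v => Finset.sum_comm
      rw [Finset.sum_congr rfl fun v _ => e0 v, Finset.sum_comm]
    rw [Finset.sum_congr rfl fun i _ => e1 i, Finset.sum_comm]
    refine Finset.sum_congr rfl fun u _ => ?_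
    rw [Finset.sum_comm]
  rw [this]
  refine Finset.sum_congr rfl fun u _ => Finset.sum_congr rfl fun v _ =>
    Finset.sum_congr rfl fun i _ => ?_
  rw [Finset.mul_sum, Finset.sum_mul]
  refine Finset.sum_congr rfl fun j _ => ?_
  rw [star_mul']
  ring

lemma sum_prod_fix {α : Type} [Fintype α] [DecidableEq α] {n : ℕ} (k : Fin n) (x : α)
    (g : Fin n → α → ℂ) :
    ∑ f : Fin n → α, (if f k = x then ∏ l, g l (f l) else 0) =
      g k x * ∏ l ∈ Finset.univ.erase k, ∑ a, g l a := by
  have h1 : ∀ f : Fin n → α, (if f k = x then ∏ l, g l (f l) else 0) =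
      ∏ l, (if l = k then (if f l = x then g l (f l) else 0) else g l (f l)) := by
    intro f
    rw [← Finset.mul_prod_erase Finset.univ _ (Finset.mem_univ k),
      ← Finset.mul_prod_erase Finset.univ (fun l => if l = k then _ else _) (Finset.mem_univ k)]
    have : ∏ l ∈ Finset.univ.erase k, (if l = k then (if f l = x then g l (f l) else 0)
        else g l (f l)) = ∏ l ∈ Finset.univ.erase k, g l (f l) :=
      Finset.prod_congr rfl fun l hl => if_neg (Finset.ne_of_mem_erase hl)
    rw [this]
    by_cases h : f k = x <;> simp [h]
  simp only [h1]
  rw [← Fintype.prod_sum (fun l a => if l = k then (if a = x then g l a else 0) else g l a),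
    ← Finset.mul_prod_erase Finset.univ _ (Finset.mem_univ k)]
  congr 1
  · simp
  · exact Finset.prod_congr rfl fun l hl => by simp [Finset.ne_of_mem_erase hl]

lemma kernel_single {A A' ι : Type} [Fintype A] [Fintype A'] [Fintype ι] [DecidableEq A]
    [DecidableEq A'] {n : ℕ} (K : ι → Matrix A' A ℂ) (hK : IsKraus K) (k : Fin n) (x y : A')
    (f h : Fin n → A) :
    ∑ f' : Fin n → A', (if f' k = x then SA (KK n K) f' (Function.update f' k y) f h else 0) =
      ∑ c, if h = Function.update f k c then SA K x y (f k) c else 0 := by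
  have h1 : ∀ f' : Fin n → A',
      (if f' k = x then SA (KK n K) f' (Function.update f' k y) f h else 0) =
      (if f' k = x then ∏ l, (fun (l : Fin n) (a : A') => if l = k then SA K x y (f l) (h l)
        else SA K a a (f l) (h l)) l (f' l) else 0) := by
    intro f'
    split_ifs with hx
    · rw [SA_KK]
      refine Finset.prod_congr rfl fun l _ => ?_
      by_cases hl : l = k
      · subst hl; simp [hx]
      · simp [hl]
    · rfl
  simp only [h1]
  rw [sum_prod_fix k x (fun (l : Fin n) (a : A') => if l = k then SA K x y (f l) (h l)
        else SA K a a (f l) (h l))]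
  have h2 : ∏ l ∈ Finset.univ.erase k, ∑ a : A', (if l = k then SA K x y (f l) (h l)
        else SA K a a (f l) (h l)) = if h = Function.update f k (h k) then 1 else 0 := by
    rw [Finset.prod_congr rfl (g := fun l => if f l = h l then (1 : ℂ) else 0) fun l hl => by
      simp only [Finset.ne_of_mem_erase hl, if_false, SA_trace K hK]]
    split_ifs with hh
    · refine Finset.prod_eq_one fun l hl => if_pos ?_
      rw [hh, Function.update_of_ne (Finset.ne_of_mem_erase hl)]
    · have : ∃ l, l ≠ k ∧ f l ≠ h l := by
        by_contra hc
        push Not at hc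
        refine hh (funext fun l => ?_)
        by_cases hl : l = k
        · subst hl; simp
        · rw [Function.update_of_ne hl, hc l hl]
      obtain ⟨l, hl, hfl⟩ := this
      exact Finset.prod_eq_zero (Finset.mem_erase.2 ⟨hl, Finset.mem_univ l⟩) (if_neg hfl)
  rw [h2, Finset.sum_eq_single (h k)]
  · simp
  · intro c _ hc
    refine if_neg fun hh => hc ?_
    rw [hh]; simp
  · simp

lemma copyMarginal_eq {A B : Type} [Fintype A] [Fintype B] [DecidableEq A] [DecidableEq B] {n : ℕ}
    (ρ : Matrix ((Fin n → A) × (Fin n → B)) ((Fin n → A) × (Fin n → B)) ℂ) (k : Fin n)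
    (x y : A × B) :
    copyMarginal ρ k x y = ∑ u, if (u.1 k, u.2 k) = x then
      ρ u (Function.update u.1 k y.1, Function.update u.2 k y.2) else 0 := by
  rw [copyMarginal, Matrix.of_apply, Fintype.sum_prod_type]
  simp only [Prod.ext_iff]

lemma kernel_pair {A A' B B' ι κ : Type} [Fintype A] [Fintype A'] [Fintype ι] [DecidableEq A]
    [DecidableEq A'] [Fintype B] [Fintype B'] [Fintype κ] [DecidableEq B] [DecidableEq B'] {n : ℕ}
    (K : ι → Matrix A' A ℂ) (hK : IsKraus K) (L : κ → Matrix B' B ℂ) (hL : IsKraus L)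
    (k : Fin n) (x y : A' × B')
    (u v : (Fin n → A) × (Fin n → B)) :
    ∑ w : (Fin n → A') × (Fin n → B'), (if (w.1 k, w.2 k) = x then
        SA (KK n K) w.1 (Function.update w.1 k y.1) u.1 v.1 *
        SA (KK n L) w.2 (Function.update w.2 k y.2) u.2 v.2 else 0) =
      ∑ c : A × B, if v = (Function.update u.1 k c.1, Function.update u.2 k c.2) then
        SA K x.1 y.1 (u.1 k) c.1 * SA L x.2 y.2 (u.2 k) c.2 else 0 := by
  have ite_mul_ite : ∀ (P Q : Prop) [Decidable P] [Decidable Q] [Decidable (P ∧ Q)] (a b : ℂ),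
      (if P ∧ Q then a * b else 0) = (if P then a else 0) * (if Q then b else 0) := by
    intro P Q _ _ _ a b
    by_cases hP : P <;> by_cases hQ : Q <;> simp [hP, hQ]
  simp only [Prod.ext_iff, ite_mul_ite, Fintype.sum_prod_type]
  simp only [← Finset.sum_mul_sum]
  rw [kernel_single K hK, kernel_single L hL]

lemma copyMarginal_localApply {A A' B B' ι κ : Type} [Fintype A] [Fintype A'] [Fintype ι]
    [DecidableEq A]
    [DecidableEq A'] [Fintype B] [Fintype B'] [Fintype κ] [DecidableEq B] [DecidableEq B'] {n : ℕ}
    (K : ι → Matrix A' A ℂ) (hK : IsKraus K) (L : κ → Matrix B' B ℂ) (hL : IsKraus L)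
    (k : Fin n)
    (τ : Matrix ((Fin n → A) × (Fin n → B)) ((Fin n → A) × (Fin n → B)) ℂ) :
    copyMarginal (localApply (KK n K) (KK n L) τ) k = localApply K L (copyMarginal τ k) := by
  ext x y
  rw [copyMarginal_eq, localApply_entry]
  have hL1 : ∀ w : (Fin n → A') × (Fin n → B'), (if (w.1 k, w.2 k) = x then
      localApply (KK n K) (KK n L) τ w (Function.update w.1 k y.1, Function.update w.2 k y.2)
        else 0) = ∑ u, ∑ v, (if (w.1 k, w.2 k) = x then
        SA (KK n K) w.1 (Function.update w.1 k y.1) u.1 v.1 *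
        SA (KK n L) w.2 (Function.update w.2 k y.2) u.2 v.2 else 0) * τ u v := by
    intro w
    split_ifs with h
    · rw [localApply_entry]
    · simp
  rw [Finset.sum_congr rfl fun w _ => hL1 w, Finset.sum_comm]
  have hL2 : ∀ u : (Fin n → A) × (Fin n → B), ∑ w : (Fin n → A') × (Fin n → B'),
      ∑ v, (if (w.1 k, w.2 k) = x then
        SA (KK n K) w.1 (Function.update w.1 k y.1) u.1 v.1 *
        SA (KK n L) w.2 (Function.update w.2 k y.2) u.2 v.2 else 0) * τ u v =
      ∑ c : A × B, SA K x.1 y.1 (u.1 k) c.1 * SA L x.2 y.2 (u.2 k) c.2 *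
        τ u (Function.update u.1 k c.1, Function.update u.2 k c.2) := by
    intro u
    rw [Finset.sum_comm]
    simp only [← Finset.sum_mul]
    simp only [kernel_pair K hK L hL]
    simp only [Finset.sum_mul]
    rw [Finset.sum_comm]
    refine Finset.sum_congr rfl fun c _ => ?_
    simp only [ite_mul, zero_mul, Finset.sum_ite_eq', Finset.mem_univ, if_true]
  rw [Finset.sum_congr rfl fun u _ => hL2 u]
  simp only [copyMarginal_eq, Finset.mul_sum]
  have : ∀ F : (A × B) → (A × B) → ((Fin n → A) × (Fin n → B)) → ℂ,
      ∑ w, ∑ c, ∑ u, F w c u = ∑ u, ∑ c, ∑ w, F w c u := by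
    intro F
    rw [Finset.sum_comm, Finset.sum_comm (s := Finset.univ (α := (Fin n → A) × (Fin n → B)))]
    refine Finset.sum_congr rfl fun c _ => ?_
    rw [Finset.sum_comm]
  rw [this]
  refine Finset.sum_congr rfl fun u _ => Finset.sum_congr rfl fun c _ => ?_
  simp only [mul_ite, mul_zero, Finset.sum_ite_eq, Finset.mem_univ, if_true]

lemma sum_pairs {A B : Type} [Fintype A] [Fintype B] [DecidableEq A] [DecidableEq B] {n : ℕ}
    (F : (Fin n → A) × (Fin n → B) → ℂ) :
    ∑ u, F u = ∑ w : Fin n → A × B, F (fun l => (w l).1, fun l => (w l).2) :=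
  ((Equiv.arrowProdEquivProdArrow (Fin n) (fun _ => A) (fun _ => B)).sum_comp F).symm

lemma psd_factor {d : Type} [Fintype d] [DecidableEq d] (ρ : Matrix d d ℂ) (h : ρ.PosSemidef) :
    ∃ M : Matrix d d ℂ, ρ = Mᴴ * M := by
  obtain ⟨U, p, hU, hp, hρ, -⟩ := spectral_ex ρ h
  refine ⟨diagonal (fun i => ((Real.sqrt (p i) : ℝ) : ℂ)) * Uᴴ, ?_⟩
  have : diagonal (fun i => (p i : ℂ)) = diagonal (fun i => ((Real.sqrt (p i) : ℝ) : ℂ)) *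
      diagonal (fun i => ((Real.sqrt (p i) : ℝ) : ℂ)) := by
    rw [diagonal_mul_diagonal]
    congr 1
    ext i
    rw [← Complex.ofReal_mul, Real.mul_self_sqrt (hp i)]
  rw [hρ, this, conjTranspose_mul, conjTranspose_conjTranspose, diagonal_conjTranspose]
  have h2 : star (fun i => ((Real.sqrt (p i) : ℝ) : ℂ)) = fun i => ((Real.sqrt (p i) : ℝ) : ℂ) := by
    ext i
    simp
  rw [h2]
  simp only [Matrix.mul_assoc]

lemma tpow_broadcast {A B : Type} [Fintype A] [Fintype B] [DecidableEq A] [DecidableEq B] (n : ℕ)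
    (ρ : Matrix (A × B) (A × B) ℂ) (h : IsDensity ρ) : IsBroadcast n (tpow ρ n) ρ := by
  have htr : ∑ s, ρ s s = 1 := h.2
  refine ⟨⟨?_, ?_⟩, ?_⟩
  · obtain ⟨M, hM⟩ := psd_factor ρ h.1
    have : tpow ρ n = (tpow M n)ᴴ * tpow M n := ?_
    · rw [this]
      exact Matrix.posSemidef_conjTranspose_mul_self _
    ext x y
    rw [Matrix.mul_apply, sum_pairs, tpow, Matrix.of_apply, hM]
    simp only [Matrix.mul_apply]
    rw [Fintype.prod_sum]
    refine Finset.sum_congr rfl fun w _ => ?_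
    rw [Finset.prod_mul_distrib, conjTranspose_apply, tpow, Matrix.of_apply, Matrix.of_apply,
      star_prod]
    rfl
  · rw [Matrix.trace, sum_pairs]
    simp only [Matrix.diag_apply, tpow, Matrix.of_apply]
    rw [← Fintype.prod_sum (fun _ s => ρ s s)]
    simp [htr]
  · intro k
    ext x y
    rw [copyMarginal_eq, sum_pairs]
    have h1 : ∀ w : Fin n → A × B, (if ((w k).1, (w k).2) = x then
        tpow ρ n (fun l => (w l).1, fun l => (w l).2)
          (Function.update (fun l => (w l).1) k y.1, Function.update (fun l => (w l).2) k y.2)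
          else 0) =
        if w k = x then ∏ l, (fun (l : Fin n) s => if l = k then ρ x y else ρ s s) l (w l)
          else 0 := by
      intro w
      by_cases hx : w k = x
      · rw [if_pos hx, if_pos hx, tpow, Matrix.of_apply]
        refine Finset.prod_congr rfl fun l _ => ?_
        by_cases hl : l = k
        · subst hl; simp [hx]
        · simp [hl]
      · rw [if_neg hx, if_neg hx]
    rw [Finset.sum_congr rfl fun w _ => h1 w, sum_prod_fix k x
      (fun (l : Fin n) s => if l = k then ρ x y else ρ s s)]
    rw [Finset.prod_eq_one fun l hl => by simp [Finset.ne_of_mem_erase hl, htr]]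
    simp

lemma vnEntropy_bounds {d : Type} [Fintype d] [DecidableEq d] (ρ : Matrix d d ℂ)
    (h : IsDensity ρ) :
    0 ≤ Real.log 2 * vnEntropy ρ ∧ Real.log 2 * vnEntropy ρ ≤ Fintype.card d := by
  obtain ⟨U, p, hU, hp, hρ, hS⟩ := spectral_ex ρ h.1
  have hsump : ∑ i, p i = 1 := by
    have h1 : (U * diagonal (fun i => (p i : ℂ)) * Uᴴ).trace = 1 := by rw [← hρ]; exact h.2
    rw [Matrix.trace_mul_comm, ← Matrix.mul_assoc, hU, Matrix.one_mul, trace_diagonal] at h1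
    exact_mod_cast h1
  rw [hS, ← Finset.sum_neg_distrib]
  constructor
  · refine Finset.sum_nonneg fun i _ => ?_
    have h1 : p i ≤ 1 := by
      rw [← hsump]
      exact Finset.single_le_sum (fun i _ => hp i) (Finset.mem_univ i)
    have := mul_nonneg (hp i) (neg_nonneg.2 (Real.log_nonpos (hp i) h1))
    linarith
  · have : ∀ i ∈ Finset.univ, -(p i * Real.log (p i)) ≤ (1 : ℝ) := by
      intro i _
      rcases (hp i).eq_or_lt with h0 | h0
      · simp [← h0]
      · have h1 := mul_le_mul_of_nonneg_left (Real.one_sub_inv_le_log_of_pos h0) h0.le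
        rw [mul_sub, mul_inv_cancel₀ h0.ne'] at h1
        linarith
    simpa using Finset.sum_le_sum this

lemma mutInfo_lower {A B : Type} [Fintype A] [Fintype B] [DecidableEq A] [DecidableEq B]
    (τ : Matrix (A × B) (A × B) ℂ) (h : IsDensity τ) :
    -(Fintype.card (A × B) : ℝ) / Real.log 2 ≤ mutInfo τ := by
  have htr : ∑ s, τ s s = 1 := h.2
  have hA : IsDensity (ptraceB τ) := by
    refine ⟨ptraceB_posSemidef h.1, ?_⟩
    rw [← htr, Fintype.sum_prod_type]; rfl
  have hB : IsDensity (ptraceA τ) := by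
    refine ⟨ptraceA_posSemidef h.1, ?_⟩
    rw [← htr, Fintype.sum_prod_type_right]; rfl
  have h1 := (vnEntropy_bounds _ hA).1
  have h2 := (vnEntropy_bounds _ hB).1
  have h3 := (vnEntropy_bounds _ h).2
  rw [div_le_iff₀ (Real.log_pos one_lt_two), mutInfo]
  linarith

lemma Ib_mono {A B A' B' ι κ : Type}
    [Fintype A] [Fintype B] [Fintype A'] [Fintype B'] [Fintype ι] [Fintype κ]
    [DecidableEq A] [DecidableEq B] [DecidableEq A'] [DecidableEq B']
    (K : ι → Matrix A' A ℂ) (L : κ → Matrix B' B ℂ) (hK : IsKraus K) (hL : IsKraus L)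
    (ρ : Matrix (A × B) (A × B) ℂ) (hρ : IsDensity ρ) (n : ℕ) :
    Ib n (localApply K L ρ) ≤ Ib n ρ := by
  unfold Ib
  refine le_csInf ⟨_, tpow ρ n, tpow_broadcast n ρ hρ, rfl⟩ ?_
  rintro _ ⟨τ, hτ, rfl⟩
  refine le_trans (csInf_le ?_ ?_)
    (mutInfo_mono (KK n K) (KK n L) (KK_kraus n K hK) (KK_kraus n L hL) τ hτ.1)
  · refine ⟨-(Fintype.card ((Fin n → A') × (Fin n → B')) : ℝ) / Real.log 2, ?_⟩
    rintro _ ⟨σ, hσ, rfl⟩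
    exact mutInfo_lower σ hσ.1
  · refine ⟨_, ⟨localApply_density _ _ (KK_kraus n K hK) (KK_kraus n L hL) τ hτ.1, ?_⟩, rfl⟩
    intro k
    rw [copyMarginal_localApply K hK L hL, hτ.2 k]

/-- monotonicity of I_b^{(∞)} under local CPTP maps (given by
Kraus representations), stated via the defining limits. -/
theorem stmt_12 {A B A' B' ι κ : Type}
    [Fintype A] [Fintype B] [Fintype A'] [Fintype B'] [Fintype ι] [Fintype κ]
    [DecidableEq A] [DecidableEq B] [DecidableEq A'] [DecidableEq B']
    (K : ι → Matrix A' A ℂ) (Lk : κ → Matrix B' B ℂ)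
    (hK : IsKraus K) (hLk : IsKraus Lk)
    (ρ : Matrix (A × B) (A × B) ℂ) (hρ : IsDensity ρ)
    (L L' : ℝ)
    (hL : Tendsto (fun n : ℕ => Ib n ρ / n) atTop (nhds L))
    (hL' : Tendsto (fun n : ℕ => Ib n (localApply K Lk ρ) / n) atTop (nhds L')) :
    L' ≤ L := by
  exact le_of_tendsto_of_tendsto' hL' hL fun n =>
    div_le_div_of_nonneg_right (Ib_mono K Lk hK hLk ρ hρ n) (Nat.cast_nonneg n)

end
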